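/- arXiv:0905.2557 — 2 statements merged into one kernel-verified Lean document; each statement's English description precedes it below -/
import Mathlib

section
/- Jacobi–Trudy formula for generalized Schur polynomials: for every partition λ = (λ_1 ≥ … ≥ λ_l > 0) of length l ≤ n, one has S_λ(x_1,…,x_n|a,b) = det( h^{(j−1)}_{λ_i − i + 1} )_{1 ≤ i,j ≤ l}. -/
open Polynomial Matrix Finset

noncomputable section

variable {K L : Type*} [Field K] [Field L]

/-- The orthogonal-polynomial sequence: `φ₀ = 1`, `φ₁ = z - a 0`,
`φ_{i+1} = (z - a i)·φ_i - b i·φ_{i-1}` (so `φ_{-1} = 0`). -/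
def phi (a b : ℤ → K) : ℕ → Polynomial K
  | 0 => 1
  | 1 => Polynomial.X - Polynomial.C (a 0)
  | (i+2) => (Polynomial.X - Polynomial.C (a (i+1))) * phi a b (i+1)
      - Polynomial.C (b (i+1)) * phi a b i

/-- `φ` with integer index, `0` for negative index. -/
def phiZ (a b : ℤ → K) (m : ℤ) : Polynomial K :=
  if m < 0 then 0 else phi a b m.toNat

/-- Generalized Schur polynomial `S_λ(y₁,…,y_m|a,b)
  = det(φ_{λ_j+m-j}(y_i)) / ∏_{i<j}(y_i - y_j)` (indices here 0-based). -/
def genS (a b : ℤ → K) (c : K →+* L) {m : ℕ} (y : Fin m → L) (lam : Fin m → ℕ) : L :=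
  Matrix.det (Matrix.of fun i j : Fin m =>
      (phi a b (lam j + (m - 1 - (j : ℕ)))).eval₂ c (y i)) /
    ∏ i : Fin m, ∏ j ∈ Finset.Ioi i, (y i - y j)

/-- `h_i = S_{(i)}` for `i ≥ 0`, and `h_i = 0` for `i < 0`. -/
def genh (a b : ℤ → K) (c : K →+* L) {m : ℕ} (y : Fin m → L) (i : ℤ) : L :=
  if i < 0 then 0 else genS a b c y (fun j => if (j : ℕ) = 0 then i.toNat else 0)

/-- `h_i^{(0)} = h_i`, `h_i^{(r+1)} = h_{i+1}^{(r)} + a(i+m-1)h_i^{(r)} + b(i+m-1)h_{i-1}^{(r)}`. -/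
def genhr (a b : ℤ → K) (c : K →+* L) {m : ℕ} (y : Fin m → L) : ℕ → ℤ → L
  | 0, i => genh a b c y i
  | (r+1), i => genhr a b c y r (i+1) + c (a (i + m - 1)) * genhr a b c y r i
      + c (b (i + m - 1)) * genhr a b c y r (i-1)

/-- The field `F = K(x₁,…,x_n)`. -/
abbrev Fn (K : Type*) [Field K] (n : ℕ) := FractionRing (MvPolynomial (Fin n) K)

/-- The embedding `K → K(x₁,…,x_n)`. -/
def cK (K : Type*) [Field K] (n : ℕ) : K →+* Fn K n :=
  (algebraMap (MvPolynomial (Fin n) K) (Fn K n)).comp MvPolynomial.C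

/-- The variables `x₁,…,x_n` as elements of `K(x₁,…,x_n)`. -/
def xv (K : Type*) [Field K] (n : ℕ) (i : Fin n) : Fn K n :=
  algebraMap (MvPolynomial (Fin n) K) (Fn K n) (MvPolynomial.X i)

/-!
Both sides are determinants of divided differences at the distinct nodes `y_1, …, y_m`. The
functional `p ↦ ∑ i, p(y_i) / ∏_{j ≠ i} (y_i - y_j)` reads off the coefficient of degree `m - 1` of a
polynomial of degree less than `m`. Multiplying the transpose of the matrix `φ_{λ_j + m - j}(y_i)` by
the diagonal matrix of nodal weights and by the Vandermonde matrix shows that `S_λ` is the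
determinant of the divided differences of `z^{j-1} φ_{λ_i + m - i}`; the rows with `i > l` are
unitriangular, so only the leading `l × l` minor matters. For a one-row partition this expresses
`h_i` as the divided difference of `φ_{i+m-1}`, and the recurrence defining `h^{(r)}` is the
three-term recurrence for multiplication by `z`, so that `h_i^{(r)}` is the divided difference of
`z^r φ_{i+m-1}`.
-/

section DividedDifference

variable {ι : Type*} [Fintype ι] [DecidableEq ι]

/-- The divided difference of a polynomial at the nodes `y`, one for each element of `ι`, as a
linear functional. It is meaningful only for distinct nodes. -/
def dividedDiff (y : ι → L) : L[X] →ₗ[L] L :=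
  ∑ i, Lagrange.nodalWeight univ y i • leval (y i)

theorem dividedDiff_apply (y : ι → L) (p : L[X]) :
    dividedDiff y p = ∑ i, Lagrange.nodalWeight univ y i * p.eval (y i) := by
  simp [dividedDiff, leval]

theorem dividedDiff_eq_coeff {y : ι → L} (hy : Function.Injective y) {p : L[X]}
    (hp : p.degree < Fintype.card ι) : dividedDiff y p = p.coeff (Fintype.card ι - 1) := by
  rw [dividedDiff_apply, ← card_univ, Lagrange.coeff_eq_sum hy.injOn (by rwa [card_univ])]
  simp only [Lagrange.nodalWeight, prod_inv_distrib, div_eq_inv_mul]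

theorem dividedDiff_eq_zero_of_degree_lt {y : ι → L} (hy : Function.Injective y) {p : L[X]}
    (hp : p.degree < (Fintype.card ι - 1 : ℕ)) : dividedDiff y p = 0 := by
  rw [dividedDiff_eq_coeff hy (hp.trans_le (by exact_mod_cast Nat.sub_le _ 1)),
    coeff_eq_zero_of_degree_lt hp]

theorem dividedDiff_eq_one_of_isMonicOfDegree {y : ι → L} (hy : Function.Injective y) {p : L[X]}
    {k : ℕ} (hp : IsMonicOfDegree p k) (hk : k + 1 = Fintype.card ι) : dividedDiff y p = 1 := by
  have hdeg : p.degree < Fintype.card ι :=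
    (natDegree_lt_iff_degree_lt hp.ne_zero).mp (by rw [hp.natDegree_eq]; omega)
  rw [dividedDiff_eq_coeff hy hdeg, ← hk, Nat.add_sub_cancel, ← hp.leadingCoeff_eq, leadingCoeff,
    hp.natDegree_eq]

end DividedDifference

section Determinants

theorem prod_nodalWeight_eq_inv {m : ℕ} (y : Fin m → L) :
    ∏ i, Lagrange.nodalWeight univ y i =
      (det (vandermonde y) * ∏ i : Fin m, ∏ j ∈ Ioi i, (y i - y j))⁻¹ := by
  have hpairs := prod_prod_Ioi_mul_eq_prod_prod_off_diag fun i j : Fin m => y j - y i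
  simp only [prod_mul_distrib] at hpairs
  simp only [Lagrange.nodalWeight, prod_inv_distrib]
  rw [det_vandermonde, mul_comm, hpairs]
  simp only [compl_singleton]

theorem det_dividedDiff_X_pow_mul {m : ℕ} {y : Fin m → L} (hy : Function.Injective y)
    (p : Fin m → L[X]) :
    det (of fun i j : Fin m => dividedDiff y (X ^ (j : ℕ) * p i)) =
      det (of fun i j : Fin m => (p j).eval (y i)) / ∏ i : Fin m, ∏ j ∈ Ioi i, (y i - y j) := by
  have hfactor : (of fun i j : Fin m => dividedDiff y (X ^ (j : ℕ) * p i)) =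
      (of fun i j : Fin m => (p j).eval (y i))ᵀ *
        diagonal (Lagrange.nodalWeight univ y) * vandermonde y := by
    ext i j
    rw [mul_apply]
    simp only [of_apply, dividedDiff_apply, mul_diagonal, transpose_apply, vandermonde_apply,
      eval_mul, eval_pow, eval_X]
    exact sum_congr rfl fun k _ => by ring
  have hV : det (vandermonde y) ≠ 0 := det_vandermonde_ne_zero_iff.mpr hy
  rw [hfactor, det_mul, det_mul, det_transpose, det_diagonal, prod_nodalWeight_eq_inv]
  field_simp

theorem det_eq_det_submatrix_castLE {R : Type*} [CommRing R] {m l : ℕ} (hl : l ≤ m)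
    (M : Matrix (Fin m) (Fin m) R)
    (hlower : ∀ i j : Fin m, l ≤ (i : ℕ) → j < i → M i j = 0)
    (hdiag : ∀ i : Fin m, l ≤ (i : ℕ) → M i i = 1) :
    M.det = (M.submatrix (Fin.castLE hl) (Fin.castLE hl)).det := by
  have hupper : (toSquareBlockProp M fun i => ¬ (i : ℕ) < l).IsUpperTriangular :=
    fun i j hij => hlower i j (not_lt.mp i.2) hij
  have htail : (toSquareBlockProp M fun i => ¬ (i : ℕ) < l).det = 1 := by
    rw [det_of_isUpperTriangular hupper]
    exact prod_eq_one fun i _ => hdiag i (not_lt.mp i.2)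
  rw [twoBlockTriangular_det M (fun i => (i : ℕ) < l)
      fun i hi j hj => hlower i j (not_lt.mp hi) (hj.trans_le (not_lt.mp hi)),
    htail, mul_one, ← det_submatrix_equiv_self (Fin.castLEquiv hl)]
  rfl

end Determinants

section Phi

variable (a b : ℤ → K)

theorem isMonicOfDegree_phi : ∀ k : ℕ, IsMonicOfDegree (phi a b k) k
  | 0 => isMonicOfDegree_zero_iff.mpr rfl
  | 1 => isMonicOfDegree_X_sub_one (a 0)
  | k + 2 => by
    have hlead : IsMonicOfDegree ((X - C (a (k + 1))) * phi a b (k + 1)) (k + 2) := by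
      simpa only [Nat.add_comm 1] using
        (isMonicOfDegree_X_sub_one (a (k + 1))).mul (isMonicOfDegree_phi (k + 1))
    refine hlead.sub ((natDegree_C_mul_le _ _).trans_lt ?_)
    rw [(isMonicOfDegree_phi k).natDegree_eq]
    omega

theorem phiZ_natCast (k : ℕ) : phiZ a b k = phi a b k := by
  simp [phiZ]

theorem phiZ_of_neg {k : ℤ} (hk : k < 0) : phiZ a b k = 0 :=
  if_pos hk

/-- At `k = -1` the recurrence fails: the left side is `0`, the right side `φ₀ = 1`. -/
theorem X_mul_phiZ {k : ℤ} (hk : k ≠ -1) :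
    X * phiZ a b k = phiZ a b (k + 1) + C (a k) * phiZ a b k + C (b k) * phiZ a b (k - 1) := by
  rcases lt_or_ge k 0 with hneg | hnonneg
  · rw [phiZ_of_neg a b hneg, phiZ_of_neg a b (by omega : k + 1 < 0),
      phiZ_of_neg a b (by omega : k - 1 < 0)]
    simp
  · obtain ⟨k, rfl⟩ := Int.eq_ofNat_of_zero_le hnonneg
    cases k with
    | zero => simp [phiZ, phi]
    | succ k =>
      rw [show ((k + 1 : ℕ) : ℤ) - 1 = (k : ℕ) by omega,
        show ((k + 1 : ℕ) : ℤ) + 1 = (k + 2 : ℕ) by omega, phiZ_natCast, phiZ_natCast,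
        phiZ_natCast, phi]
      push_cast
      ring

end Phi

section JacobiTrudy

variable (a b : ℤ → K) (c : K →+* L) {m : ℕ} {y : Fin m → L}

theorem isMonicOfDegree_X_pow_mul_map_phi (r k : ℕ) :
    IsMonicOfDegree (X ^ r * (phi a b k).map c) (r + k) := by
  have hφ := isMonicOfDegree_phi a b k
  exact (isMonicOfDegree_X_pow L r).mul
    ⟨by rw [hφ.monic.natDegree_map, hφ.natDegree_eq], hφ.monic.map c⟩

theorem dividedDiff_X_pow_mul_phiZ_eq_zero (hy : Function.Injective y) {r : ℕ} {k : ℤ}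
    (hrk : r + k < m - 1) : dividedDiff y (X ^ r * (phiZ a b k).map c) = 0 := by
  rcases lt_or_ge k 0 with hneg | hnonneg
  · rw [phiZ_of_neg a b hneg, Polynomial.map_zero, mul_zero, map_zero]
  · obtain ⟨k, rfl⟩ := Int.eq_ofNat_of_zero_le hnonneg
    have hmonic := isMonicOfDegree_X_pow_mul_map_phi a b c r k
    rw [phiZ_natCast]
    refine dividedDiff_eq_zero_of_degree_lt hy
      ((natDegree_lt_iff_degree_lt hmonic.ne_zero).mp ?_)
    rw [hmonic.natDegree_eq, Fintype.card_fin]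
    omega

theorem dividedDiff_X_pow_mul_phiZ_eq_one (hy : Function.Injective y) {r : ℕ} {k : ℤ}
    (hk : 0 ≤ k) (hrk : r + k = m - 1) : dividedDiff y (X ^ r * (phiZ a b k).map c) = 1 := by
  obtain ⟨k, rfl⟩ := Int.eq_ofNat_of_zero_le hk
  rw [phiZ_natCast]
  refine dividedDiff_eq_one_of_isMonicOfDegree hy (isMonicOfDegree_X_pow_mul_map_phi a b c r k) ?_
  rw [Fintype.card_fin]
  omega

theorem dividedDiff_X_pow_succ_mul_phiZ (hy : Function.Injective y) {r : ℕ} (hr : r + 1 < m)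
    (k : ℤ) :
    dividedDiff y (X ^ (r + 1) * (phiZ a b k).map c) =
      dividedDiff y (X ^ r * (phiZ a b (k + 1)).map c) +
        c (a k) * dividedDiff y (X ^ r * (phiZ a b k).map c) +
        c (b k) * dividedDiff y (X ^ r * (phiZ a b (k - 1)).map c) := by
  rcases eq_or_ne k (-1) with rfl | hk
  -- Here `X * φ₋₁ ≠ φ₀`, but the divided difference of `X ^ r * φ₀` vanishes as well.
  · rw [dividedDiff_X_pow_mul_phiZ_eq_zero a b c hy (by omega),
      dividedDiff_X_pow_mul_phiZ_eq_zero a b c hy (by omega),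
      dividedDiff_X_pow_mul_phiZ_eq_zero a b c hy (by omega),
      dividedDiff_X_pow_mul_phiZ_eq_zero a b c hy (by omega)]
    simp only [mul_zero, add_zero]
  · have hrec := congrArg (Polynomial.map c) (X_mul_phiZ a b hk)
    simp only [Polynomial.map_mul, Polynomial.map_add, map_X, map_C] at hrec
    rw [pow_succ, mul_assoc, hrec]
    simp only [mul_add, ← smul_eq_C_mul, mul_smul_comm, map_add, map_smul, smul_eq_mul]

theorem genS_eq_det_dividedDiff (hy : Function.Injective y) {l : ℕ} (hl : l ≤ m)
    {lam : Fin m → ℕ} (hzero : ∀ i : Fin m, l ≤ (i : ℕ) → lam i = 0) :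
    genS a b c y lam = det (of fun i j : Fin l => dividedDiff y (X ^ (j : ℕ) *
      (phiZ a b ((lam (Fin.castLE hl i) : ℤ) - (i : ℕ) + m - 1)).map c)) := by
  have hindex (i : Fin m) :
      phi a b (lam i + (m - 1 - (i : ℕ))) = phiZ a b ((lam i : ℤ) - (i : ℕ) + m - 1) := by
    rw [← phiZ_natCast]
    congr 1
    omega
  have hdet := det_dividedDiff_X_pow_mul hy
    fun i : Fin m => (phiZ a b ((lam i : ℤ) - (i : ℕ) + m - 1)).map c
  simp only [eval_map] at hdet
  simp only [genS, hindex]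
  rw [← hdet, det_eq_det_submatrix_castLE hl]
  · rfl
  · intro i j hi hij
    have := hzero i hi
    exact dividedDiff_X_pow_mul_phiZ_eq_zero a b c hy (by omega)
  · intro i hi
    have := hzero i hi
    exact dividedDiff_X_pow_mul_phiZ_eq_one a b c hy (by omega) (by omega)

theorem genh_eq_dividedDiff (hy : Function.Injective y) (hm : 1 ≤ m) (i : ℤ) :
    genh a b c y i = dividedDiff y ((phiZ a b (i + m - 1)).map c) := by
  rw [genh]
  split_ifs with hi
  · simpa using (dividedDiff_X_pow_mul_phiZ_eq_zero a b c hy (r := 0) (k := i + m - 1)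
      (by omega)).symm
  · rw [genS_eq_det_dividedDiff a b c hy hm fun j hj => if_neg (by omega), det_fin_one]
    simp [Int.toNat_of_nonneg (not_lt.mp hi)]

theorem genhr_eq_dividedDiff (hy : Function.Injective y) {r : ℕ} (hr : r < m) (i : ℤ) :
    genhr a b c y r i = dividedDiff y (X ^ r * (phiZ a b (i + m - 1)).map c) := by
  induction r generalizing i with
  | zero => rw [pow_zero, one_mul, genhr, genh_eq_dividedDiff a b c hy hr]
  | succ r ih =>
    have hr' : r < m := by omega
    rw [genhr, ih hr', ih hr', ih hr', dividedDiff_X_pow_succ_mul_phiZ a b c hy hr,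
      show i + 1 + m - 1 = i + m - 1 + 1 by ring, show i - 1 + m - 1 = i + m - 1 - 1 by ring]

theorem generalized_jacobi_trudy_general (hy : Function.Injective y) {l : ℕ} (hl : l ≤ m)
    {lam : Fin m → ℕ} (hzero : ∀ i : Fin m, l ≤ (i : ℕ) → lam i = 0) :
    genS a b c y lam = det (of fun i j : Fin l =>
      genhr a b c y (j : ℕ) ((lam (Fin.castLE hl i) : ℤ) - (i : ℕ))) := by
  rw [genS_eq_det_dividedDiff a b c hy hl hzero]
  congr 1
  ext i j
  exact (genhr_eq_dividedDiff a b c hy (j.2.trans_le hl) _).symm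

end JacobiTrudy

theorem xv_injective (K : Type*) [Field K] (n : ℕ) : Function.Injective (xv K n) :=
  (IsFractionRing.injective (MvPolynomial (Fin n) K) (Fn K n)).comp MvPolynomial.X_injective

/-- **Jacobi–Trudy formula for generalized Schur polynomials.**
For a partition `λ = (λ_1 ≥ … ≥ λ_l > 0)` of length `l ≤ n` (encoded 0-based as
`lam : Fin n → ℕ`), one has `S_λ(x|a,b) = det( h^{(j-1)}_{λ_i - i + 1} )_{1 ≤ i,j ≤ l}`. -/
theorem generalized_jacobi_trudy (K : Type*) [Field K] (a b : ℤ → K) (n l : ℕ)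
    (hn : 1 ≤ n) (hl : l ≤ n) (lam : Fin n → ℕ) (hanti : Antitone lam)
    (hpos : ∀ i : Fin n, (i : ℕ) < l → 0 < lam i)
    (hzero : ∀ i : Fin n, l ≤ (i : ℕ) → lam i = 0) :
    genS a b (cK K n) (xv K n) lam =
      Matrix.det (Matrix.of fun i j : Fin l =>
        genhr a b (cK K n) (xv K n) (j : ℕ)
          ((lam (Fin.castLE hl i) : ℤ) - (i : ℕ))) := by
  exact generalized_jacobi_trudy_general a b _ (xv_injective K n) hl hzero
end
end

section
/- For every partition λ of length l (λ_1 ≥ … ≥ λ_l > 0), with conjugate λ′ and number of diagonal boxes r = #{i : λ_i ≥ i}, the following identity holds in the ring of Laurent polynomials ℤ[t, t^{−1}]: Σ_{i=1}^{l} t^{i}(1 − t^{−λ_i}) = Σ_{j=1}^{r} ( t^{λ′_j − j + 1} − t^{j − λ_j} ). -/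
open LaurentPolynomial

/-!
Put `w(i, j) = f (i - j + 1) - f (i - j)` on the box `(i, j)` of the Young diagram, with
`f k = t ^ k`. Along row `i` the weights telescope to `f i - f (i - λ_i)`. The diagram is also the
disjoint union of its diagonal hooks; the arm of the hook at `(k, k)` telescopes to
`f 1 - f (k - λ_k)`, its leg to `f (λ'_k - k + 1) - f 1`, and the terms `f 1` cancel.
-/

section Telescoping

variable {G : Type*} [AddCommGroup G] (f : ℤ → G) (c : ℤ) {a b : ℕ}

theorem sum_Icc_sub_along_row (hab : a ≤ b + 1) :
    ∑ j ∈ Finset.Icc a b, (f (c - j + 1) - f (c - j)) = f (c - a + 1) - f (c - b) := by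
  have htel := Finset.sum_Ico_sub (fun j : ℕ => -f (c - j + 1)) hab
  rw [Finset.Ico_add_one_right_eq_Icc] at htel
  simpa [← sub_sub, neg_add_eq_sub] using htel

theorem sum_Ioc_sub_along_column (hab : a ≤ b) :
    ∑ i ∈ Finset.Ioc a b, (f (i - c + 1) - f (i - c)) = f (b - c + 1) - f (a - c + 1) := by
  have htel := Finset.sum_Ico_sub (fun i : ℕ => f (i - c)) (Nat.add_le_add_right hab 1)
  rw [Finset.Ico_add_one_add_one_eq_Ioc] at htel
  simpa [add_sub_right_comm] using htel

end Telescoping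

theorem eq_Icc_one_card {s : Finset ℕ} (hzero : 0 ∉ s)
    (hs : ∀ ⦃i j : ℕ⦄, 1 ≤ i → i ≤ j → j ∈ s → i ∈ s) : s = Finset.Icc 1 s.card := by
  refine (Finset.eq_of_subset_of_card_le (fun i hi => ?_) (by simp)).symm
  obtain ⟨hi_pos, hi_le⟩ := Finset.mem_Icc.mp hi
  by_contra his
  have hsub : s ⊆ Finset.Ico 1 i := fun j hj =>
    Finset.mem_Ico.mpr ⟨Nat.pos_of_ne_zero fun h => hzero (h ▸ hj),
      lt_of_not_ge fun hij => his (hs hi_pos hij hj)⟩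
  have hcard : s.card ≤ i - 1 := by simpa using Finset.card_le_card hsub
  omega

theorem filter_Icc_one_eq_Icc_card {p : ℕ → Prop} [DecidablePred p] {l : ℕ}
    (hp : ∀ ⦃i k : ℕ⦄, i ∈ Set.Icc 1 l → k ∈ Set.Icc 1 l → i ≤ k → p k → p i) :
    (Finset.Icc 1 l).filter p = Finset.Icc 1 ((Finset.Icc 1 l).filter p).card := by
  refine eq_Icc_one_card (by simp) fun i k hi hik hk => ?_
  simp only [Finset.mem_filter, Finset.mem_Icc] at hk ⊢
  have hil : i ≤ l := hik.trans hk.1.2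
  exact ⟨⟨hi, hil⟩, hp ⟨hi, hil⟩ hk.1 hik hk.2⟩

/-- The part `λ'_j` of the conjugate of `λ = (lam 1, …, lam l)`, that is, the length of the `j`-th
column of its Young diagram. Rows and columns are numbered from `1`; other values of `lam` are
ignored. -/
def conjugatePart (l : ℕ) (lam : ℕ → ℕ) (j : ℕ) : ℕ :=
  ((Finset.Icc 1 l).filter fun i => j ≤ lam i).card

/-- The number of diagonal boxes of `λ = (lam 1, …, lam l)`, which is the side of its Durfee
square. -/
def durfeeSize (l : ℕ) (lam : ℕ → ℕ) : ℕ :=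
  ((Finset.Icc 1 l).filter fun i => i ≤ lam i).card

section Partition

variable {l : ℕ} {lam : ℕ → ℕ}

theorem filter_le_part_eq_Icc_conjugatePart (hanti : AntitoneOn lam (Set.Icc 1 l)) (j : ℕ) :
    (Finset.Icc 1 l).filter (fun i => j ≤ lam i) = Finset.Icc 1 (conjugatePart l lam j) :=
  filter_Icc_one_eq_Icc_card fun _ _ hi hk hik hjk => hjk.trans (hanti hi hk hik)

theorem filter_index_le_part_eq_Icc_durfeeSize (hanti : AntitoneOn lam (Set.Icc 1 l)) :
    (Finset.Icc 1 l).filter (fun i => i ≤ lam i) = Finset.Icc 1 (durfeeSize l lam) :=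
  filter_Icc_one_eq_Icc_card fun _ _ hi hk hik hkk => hik.trans (hkk.trans (hanti hi hk hik))

theorem mem_Icc_conjugatePart (hanti : AntitoneOn lam (Set.Icc 1 l)) {i j : ℕ} :
    i ∈ Finset.Icc 1 (conjugatePart l lam j) ↔ i ∈ Finset.Icc 1 l ∧ j ≤ lam i := by
  rw [← filter_le_part_eq_Icc_conjugatePart hanti, Finset.mem_filter]

theorem mem_Icc_durfeeSize (hanti : AntitoneOn lam (Set.Icc 1 l)) {k : ℕ} :
    k ∈ Finset.Icc 1 (durfeeSize l lam) ↔ k ∈ Finset.Icc 1 l ∧ k ≤ lam k := by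
  rw [← filter_index_le_part_eq_Icc_durfeeSize hanti, Finset.mem_filter]

theorem le_conjugatePart_self (hanti : AntitoneOn lam (Set.Icc 1 l)) {k : ℕ}
    (hk : k ∈ Finset.Icc 1 (durfeeSize l lam)) : k ≤ conjugatePart l lam k :=
  (Finset.mem_Icc.mp
    ((mem_Icc_conjugatePart hanti).mpr ((mem_Icc_durfeeSize hanti).mp hk))).2

section HookDecomposition

variable {M : Type*} [AddCommMonoid M] (w : ℕ → ℕ → M)

theorem sum_boxes_not_below_diagonal_eq_sum_arms (hanti : AntitoneOn lam (Set.Icc 1 l)) :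
    ∑ i ∈ Finset.Icc 1 l, ∑ j ∈ Finset.Icc i (lam i), w i j =
      ∑ k ∈ Finset.Icc 1 (durfeeSize l lam), ∑ j ∈ Finset.Icc k (lam k), w k j := by
  rw [← filter_index_le_part_eq_Icc_durfeeSize hanti]
  refine (Finset.sum_filter_of_ne fun i _ hne => ?_).symm
  exact Finset.nonempty_Icc.mp (Finset.nonempty_of_sum_ne_zero hne)

theorem sum_boxes_below_diagonal_eq_sum_legs (hanti : AntitoneOn lam (Set.Icc 1 l)) :
    ∑ i ∈ Finset.Icc 1 l, ∑ j ∈ (Finset.Icc 1 (lam i)).filter (· < i), w i j =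
      ∑ k ∈ Finset.Icc 1 (durfeeSize l lam), ∑ i ∈ Finset.Ioc k (conjugatePart l lam k), w i k := by
  refine Finset.sum_comm' fun i k => ?_
  have hconj (n : ℕ) := mem_Icc_conjugatePart hanti (i := n) (j := k)
  have hdiag := mem_Icc_durfeeSize hanti (k := k)
  simp only [Finset.mem_filter, Finset.mem_Icc, Finset.mem_Ioc] at hconj hdiag ⊢
  -- If `(i, k)` with `k < i` is a box, then so is `(k, k)`, because `k < i ≤ λ'_k`.
  have hbox_i := hconj i
  have hbox_k := hconj k
  omega

theorem sum_boxes_eq_sum_hooks (hanti : AntitoneOn lam (Set.Icc 1 l)) :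
    ∑ i ∈ Finset.Icc 1 l, ∑ j ∈ Finset.Icc 1 (lam i), w i j =
      ∑ k ∈ Finset.Icc 1 (durfeeSize l lam),
        (∑ j ∈ Finset.Icc k (lam k), w k j +
          ∑ i ∈ Finset.Ioc k (conjugatePart l lam k), w i k) := by
  rw [Finset.sum_add_distrib, ← sum_boxes_not_below_diagonal_eq_sum_arms w hanti,
    ← sum_boxes_below_diagonal_eq_sum_legs w hanti, ← Finset.sum_add_distrib]
  refine Finset.sum_congr rfl fun i hi => ?_
  have hright : (Finset.Icc 1 (lam i)).filter (¬ · < i) = Finset.Icc i (lam i) := by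
    ext j
    simp only [Finset.mem_filter, Finset.mem_Icc] at hi ⊢
    omega
  rw [← Finset.sum_filter_add_sum_filter_not _ (· < i), hright, add_comm]

end HookDecomposition

theorem frobenius_laurent_identity_general {G : Type*} [AddCommGroup G] (f : ℤ → G)
    (hanti : AntitoneOn lam (Set.Icc 1 l)) :
    ∑ i ∈ Finset.Icc 1 l, (f i - f (i - lam i)) =
      ∑ j ∈ Finset.Icc 1 (durfeeSize l lam),
        (f (conjugatePart l lam j - j + 1) - f (j - lam j)) := by
  calc
    _ = ∑ i ∈ Finset.Icc 1 l, ∑ j ∈ Finset.Icc 1 (lam i),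
          (f ((i : ℤ) - j + 1) - f (i - j)) := by
      refine Finset.sum_congr rfl fun i _ => ?_
      rw [sum_Icc_sub_along_row f i (Nat.le_add_left 1 _), Nat.cast_one, sub_add_cancel]
    _ = ∑ k ∈ Finset.Icc 1 (durfeeSize l lam),
          (∑ j ∈ Finset.Icc k (lam k), (f ((k : ℤ) - j + 1) - f (k - j)) +
            ∑ i ∈ Finset.Ioc k (conjugatePart l lam k), (f ((i : ℤ) - k + 1) - f (i - k))) :=
      sum_boxes_eq_sum_hooks _ hanti
    _ = _ := by
      refine Finset.sum_congr rfl fun k hk => ?_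
      have hkk : k ≤ lam k := ((mem_Icc_durfeeSize hanti).mp hk).2
      rw [sum_Icc_sub_along_row f k (hkk.trans (Nat.le_succ _)),
        sum_Ioc_sub_along_column f k (le_conjugatePart_self hanti hk), add_comm,
        sub_add_sub_cancel]

end Partition

/-- For a partition `λ_1 ≥ … ≥ λ_l > 0` (1-indexed via `lam`), with conjugate
`λ'_j = #{i : λ_i ≥ j}` and `r = #{i : λ_i ≥ i}` diagonal boxes, one has in `ℤ[t,t⁻¹]`:
`Σ_{i=1}^{l} t^i (1 - t^{-λ_i}) = Σ_{j=1}^{r} ( t^{λ'_j - j + 1} - t^{j - λ_j} )`. -/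
theorem frobenius_laurent_identity (l : ℕ) (lam : ℕ → ℕ)
    (hanti : ∀ i j : ℕ, 1 ≤ i → i ≤ j → j ≤ l → lam j ≤ lam i)
    (hpos : ∀ i : ℕ, 1 ≤ i → i ≤ l → 0 < lam i) :
    let conj : ℕ → ℕ := fun j => ((Finset.Icc 1 l).filter fun i => j ≤ lam i).card
    let r : ℕ := ((Finset.Icc 1 l).filter fun i => i ≤ lam i).card
    ∑ i ∈ Finset.Icc 1 l,
        (T (i : ℤ) * (1 - T (-(lam i : ℤ))) : LaurentPolynomial ℤ)
      = ∑ j ∈ Finset.Icc 1 r,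
          ((T ((conj j : ℤ) - (j : ℤ) + 1) - T ((j : ℤ) - (lam j : ℤ))) :
            LaurentPolynomial ℤ) := by
  simp only [mul_sub, mul_one, ← T_add, ← sub_eq_add_neg]
  exact frobenius_laurent_identity_general T fun i hi j hj hij => hanti i j hi.1 hij hj.2
end
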